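/- Let G be a finite, simple, connected graph with vertex set V. Then in the all-path convexity, a set S ⊆ V is a hull set if and only if it is an interval set; that is, H(S) = V if and only if I(S) = V. Consequently the hull number and the interval number of G coincide: h(G) = i(G). -/

import Mathlib

/-!
The point is that the all-path interval operator is idempotent, `I(I(S)) = I(S)`; hence `I(S)` is
the smallest convex set containing `S`, that is, `H(S) = I(S)`, and both claims follow.

Idempotence rests on a rerouting argument (`exists_path_through`). Let `P` be a `u`–`w` path, `R` a
path from a vertex `a` of `P` to a vertex `b`, and `z` a vertex of `R`. Walk along `R` from `z`
towards `a` until `P` is first met, at `x'` say, and from `z` towards `b` until `P` is first met, if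
ever. If the second walk meets `P`, at `y'` say, then replacing the part of `P` between `x'` and
`y'` by the detour through `z` gives a `u`–`w` path through `z`. Otherwise, following `P` from `u`
to `x'` and then `R` through `z` gives a `u`–`b` path through `z`.

If now `x` lies on a `u`–`w` path and `y` on a `u'`–`w'` path, with all four ends in `S`, and `z`
lies on an `x`–`y` path, then rerouting puts `z` on a `u`–`w` path or on a `u`–`y` path. In the
latter case, rerouting once more along the `u'`–`w'` path puts `z` on a `u'`–`w'` path or on a
`u'`–`u` path.
-/


/-- The all-path interval of `S`:
`I(S) = S ∪ {v | v lies on some path of G whose two endpoints belong to S}`. -/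
def allPathInterval {V : Type*} (G : SimpleGraph V) (S : Set V) : Set V :=
  S ∪ {v | ∃ u ∈ S, ∃ w ∈ S, ∃ p : G.Walk u w, p.IsPath ∧ v ∈ p.support}

/-- The convex hull of `S` in the all-path convexity: the intersection of all
convex sets containing `S`. -/
def allPathHull {V : Type*} (G : SimpleGraph V) (S : Set V) : Set V :=
  ⋂₀ {C : Set V | allPathInterval G C = C ∧ S ⊆ C}

namespace AllPath

variable {V : Type*} {G : SimpleGraph V}

theorem isPath_append {u v w : V} {p : G.Walk u v} {q : G.Walk v w} (hp : p.IsPath)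
    (hq : q.IsPath) (h : ∀ x ∈ p.support, x ∈ q.support → x = v) : (p.append q).IsPath := by
  rw [SimpleGraph.Walk.isPath_def, SimpleGraph.Walk.support_append, List.nodup_append']
  refine ⟨hp.support_nodup, hq.support_nodup.tail, fun x hx hx' => ?_⟩
  have hxv := h x hx (List.mem_of_mem_tail hx')
  have hn := hq.support_nodup
  rw [← SimpleGraph.Walk.cons_tail_support, List.nodup_cons] at hn
  exact hn.1 (hxv ▸ hx')

theorem exists_split {u w z : V} {p : G.Walk u w} (hp : p.IsPath) (hz : z ∈ p.support) :
    ∃ (q : G.Walk u z) (r : G.Walk z w), q.IsPath ∧ r.IsPath ∧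
      (∀ x, x ∈ p.support ↔ x ∈ q.support ∨ x ∈ r.support) ∧
      ∀ x ∈ q.support, x ∈ r.support → x = z := by
  obtain ⟨q, r, hq, hr, rfl⟩ := hp.mem_support_iff_exists_append.1 hz
  refine ⟨q, r, hq, hr, fun x => SimpleGraph.Walk.mem_support_append_iff _ _, fun x hx hx' => ?_⟩
  by_contra hne
  exact hp.ne_of_mem_support_of_append hne hx hx' rfl

/-- Two vertices `a ≠ b` of a path cut off disjoint initial and final segments, one ending at `a`
and the other at `b`, in one of the two orders. -/
theorem exists_outer_segments {u w a b : V} {p : G.Walk u w} (hp : p.IsPath)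
    (ha : a ∈ p.support) (hb : b ∈ p.support) (hab : a ≠ b) :
    (∃ (q : G.Walk u a) (r : G.Walk b w), q.IsPath ∧ r.IsPath ∧ q.support ⊆ p.support ∧
      r.support ⊆ p.support ∧ ∀ x ∈ q.support, x ∉ r.support) ∨
    (∃ (q : G.Walk u b) (r : G.Walk a w), q.IsPath ∧ r.IsPath ∧ q.support ⊆ p.support ∧
      r.support ⊆ p.support ∧ ∀ x ∈ q.support, x ∉ r.support) := by
  obtain ⟨q, r, hq, hr, hs, hd⟩ := exists_split hp ha
  rcases (hs b).1 hb with hbq | hbr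
  · obtain ⟨q₁, q₂, hq₁, hq₂, hs', hd'⟩ := exists_split hq hbq
    refine .inr ⟨q₁, r, hq₁, hr, fun x hx => (hs x).2 (.inl ((hs' x).2 (.inl hx))),
      fun x hx => (hs x).2 (.inr hx), fun x hx hx' => ?_⟩
    have hxa := hd x ((hs' x).2 (.inl hx)) hx'
    subst hxa
    exact hab (hd' x hx q₂.end_mem_support)
  · obtain ⟨r₁, r₂, hr₁, hr₂, hs', hd'⟩ := exists_split hr hbr
    refine .inl ⟨q, r₂, hq, hr₂, fun x hx => (hs x).2 (.inl hx),
      fun x hx => (hs x).2 (.inr ((hs' x).2 (.inr hx))), fun x hx hx' => ?_⟩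
    have hxa := hd x hx ((hs' x).2 (.inr hx'))
    subst hxa
    exact hab (hd' x r₁.start_mem_support hx')

/-- A path that meets `T` has an initial segment that ends at its first vertex in `T`. -/
theorem exists_first_hit (T : Set V) {z a : V} (p : G.Walk z a) (hp : p.IsPath)
    (hT : ∃ t ∈ p.support, t ∈ T) :
    ∃ t ∈ T, ∃ q : G.Walk z t, q.IsPath ∧ q.support ⊆ p.support ∧
      ∀ x ∈ q.support, x ∈ T → x = t := by
  induction p with
  | nil =>
    obtain ⟨t, ht, htT⟩ := hT
    simp only [SimpleGraph.Walk.support_nil, List.mem_singleton] at ht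
    subst ht
    exact ⟨t, htT, .nil, by simp, by simp, by simp⟩
  | @cons z v a h p ih =>
    rw [SimpleGraph.Walk.cons_isPath_iff] at hp
    by_cases hzT : z ∈ T
    · exact ⟨z, hzT, .nil, by simp, by simp, by simp⟩
    · obtain ⟨t, ht, htT⟩ := hT
      have htp : t ∈ p.support := by
        rw [SimpleGraph.Walk.support_cons, List.mem_cons] at ht
        rcases ht with rfl | ht
        · exact absurd htT hzT
        · exact ht
      obtain ⟨t', ht', q, hq, hsub, hfirst⟩ := ih hp.1 ⟨t, htp, htT⟩
      refine ⟨t', ht', .cons h q, hq.cons fun hz => hp.2 (hsub hz), ?_, ?_⟩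
      · rw [SimpleGraph.Walk.support_cons, SimpleGraph.Walk.support_cons]
        exact List.cons_subset_cons _ hsub
      · intro x hx hxT
        rw [SimpleGraph.Walk.support_cons, List.mem_cons] at hx
        rcases hx with rfl | hx
        · exact absurd hxT hzT
        · exact hfirst x hx hxT

/-- A segment of a path can be replaced by a detour `d` that meets the retained outer segments
`q` and `r` only at its own ends. -/
theorem exists_detour {u a b w z : V} {q : G.Walk u a} {d : G.Walk a b} {r : G.Walk b w}
    (hq : q.IsPath) (hd : d.IsPath) (hr : r.IsPath) (hqd : ∀ x ∈ q.support, x ∈ d.support → x = a)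
    (hdr : ∀ x ∈ d.support, x ∈ r.support → x = b) (hqr : ∀ x ∈ q.support, x ∉ r.support)
    (hz : z ∈ d.support) : ∃ p : G.Walk u w, p.IsPath ∧ z ∈ p.support := by
  refine ⟨q.append (d.append r), isPath_append hq (isPath_append hd hr hdr) ?_, ?_⟩
  · intro x hx hx'
    rcases (SimpleGraph.Walk.mem_support_append_iff _ _).1 hx' with h | h
    · exact hqd x hx h
    · exact absurd h (hqr x hx)
  · simp only [SimpleGraph.Walk.mem_support_append_iff]
    exact .inr (.inl hz)

/-- Rerouting: if `z` lies on a path from a vertex `a` of a `u`–`w` path `P` to `b`, then `z` lies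
on some `u`–`w` path or on some `u`–`b` path. -/
theorem exists_path_through {u w a b z : V} {P : G.Walk u w} (hP : P.IsPath) (ha : a ∈ P.support)
    {R : G.Walk a b} (hR : R.IsPath) (hz : z ∈ R.support) :
    (∃ p : G.Walk u w, p.IsPath ∧ z ∈ p.support) ∨
      ∃ p : G.Walk u b, p.IsPath ∧ z ∈ p.support := by
  by_cases hzP : z ∈ P.support
  · exact .inl ⟨P, hP, hzP⟩
  obtain ⟨R₁, R₂, hR₁, hR₂, -, hRd⟩ := exists_split hR hz
  obtain ⟨s, hs, q, hq, hqR, hqs⟩ :=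
    exists_first_hit {x | x ∈ P.support} R₁.reverse hR₁.reverse ⟨a, by simp, ha⟩
  have hqR₁ : ∀ x ∈ q.support, x ∈ R₁.support := fun x hx => by simpa using hqR hx
  by_cases hhit : ∃ t ∈ R₂.support, t ∈ {x | x ∈ P.support}
  · left
    obtain ⟨t, ht, r, hr, hrR, hrt⟩ := exists_first_hit {x | x ∈ P.support} R₂ hR₂ hhit
    have hst : s ≠ t := by
      rintro rfl
      exact hzP (hRd s (hqR₁ s q.end_mem_support) (hrR r.end_mem_support) ▸ hs)
    -- the detour from `s` to `t` through `z`, which meets `P` only at its ends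
    have hD : (q.reverse.append r).IsPath :=
      isPath_append hq.reverse hr fun x hx hx' => hRd x (hqR₁ x (by simpa using hx)) (hrR hx')
    have hzD : z ∈ (q.reverse.append r).support := by simp
    have hDP : ∀ x ∈ (q.reverse.append r).support, x ∈ P.support → x = s ∨ x = t := by
      intro x hx hxP
      rcases (SimpleGraph.Walk.mem_support_append_iff _ _).1 hx with h | h
      · exact .inl (hqs x (by simpa using h) hxP)
      · exact .inr (hrt x h hxP)
    generalize q.reverse.append r = D at hD hzD hDP
    rcases exists_outer_segments hP hs ht hst with
      ⟨A, B, hA, hB, hAP, hBP, hAB⟩ | ⟨A, B, hA, hB, hAP, hBP, hAB⟩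
    · refine exists_detour hA hD hB (fun x hx hx' => ?_) (fun x hx hx' => ?_) hAB hzD
      · refine (hDP x hx' (hAP hx)).resolve_right ?_
        rintro rfl
        exact hAB _ hx B.start_mem_support
      · refine (hDP x hx (hBP hx')).resolve_left ?_
        rintro rfl
        exact hAB _ A.end_mem_support hx'
    · refine exists_detour hA hD.reverse hB (fun x hx hx' => ?_) (fun x hx hx' => ?_) hAB
        (by simpa using hzD)
      · refine (hDP x (by simpa using hx') (hAP hx)).resolve_left ?_
        rintro rfl
        exact hAB _ hx B.start_mem_support
      · refine (hDP x (by simpa using hx) (hBP hx')).resolve_right ?_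
        rintro rfl
        exact hAB _ A.end_mem_support hx'
  · right
    obtain ⟨A, _, hA, _, hAP, _⟩ := exists_split hP hs
    refine exists_detour hA hq.reverse hR₂
      (fun x hx hx' => hqs x (by simpa using hx') ((hAP x).2 (.inl hx)))
      (fun x hx hx' => hRd x (hqR₁ x (by simpa using hx)) hx')
      (fun x hx hx' => hhit ⟨x, hx', (hAP x).2 (.inl hx)⟩) (by simp)

theorem mem_interval_iff {S : Set V} {v : V} : v ∈ allPathInterval G S ↔
    ∃ u ∈ S, ∃ w ∈ S, ∃ p : G.Walk u w, p.IsPath ∧ v ∈ p.support := by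
  refine ⟨?_, .inr⟩
  rintro (hv | hv)
  · exact ⟨v, hv, v, hv, .nil, by simp, by simp⟩
  · exact hv

theorem interval_interval (S : Set V) :
    allPathInterval G (allPathInterval G S) = allPathInterval G S := by
  refine Set.Subset.antisymm (fun z hz => ?_) Set.subset_union_left
  obtain ⟨x, hx, y, hy, R, hR, hzR⟩ := mem_interval_iff.1 hz
  obtain ⟨u, hu, w, hw, P, hP, hxP⟩ := mem_interval_iff.1 hx
  obtain ⟨u', hu', w', hw', P', hP', hyP'⟩ := mem_interval_iff.1 hy
  rcases exists_path_through hP hxP hR hzR with ⟨p, hp, hzp⟩ | ⟨p, hp, hzp⟩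
  · exact mem_interval_iff.2 ⟨u, hu, w, hw, p, hp, hzp⟩
  · rcases exists_path_through hP' hyP' hp.reverse (by simpa using hzp) with
      ⟨p', hp', hzp'⟩ | ⟨p', hp', hzp'⟩
    · exact mem_interval_iff.2 ⟨u', hu', w', hw', p', hp', hzp'⟩
    · exact mem_interval_iff.2 ⟨u', hu', u, hu, p', hp', hzp'⟩

theorem interval_mono {S T : Set V} (h : S ⊆ T) : allPathInterval G S ⊆ allPathInterval G T := by
  intro v hv
  obtain ⟨u, hu, w, hw, p⟩ := mem_interval_iff.1 hv
  exact mem_interval_iff.2 ⟨u, h hu, w, h hw, p⟩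

theorem hull_eq_interval (S : Set V) : allPathHull G S = allPathInterval G S := by
  refine Set.Subset.antisymm
    (Set.sInter_subset_of_mem ⟨interval_interval S, Set.subset_union_left⟩)
    (Set.subset_sInter ?_)
  rintro C ⟨hC, hSC⟩
  exact (interval_mono hSC).trans hC.subset

end AllPath

/-- In the all-path convexity, `S` is a hull set iff it is an interval set;
consequently the hull number equals the interval number: `h(G) = i(G)`. -/
theorem allPath_hullNumber_eq_intervalNumber {V : Type*} [Fintype V]
    (G : SimpleGraph V) (hG : G.Connected) :
    (∀ S : Set V, allPathHull G S = Set.univ ↔ allPathInterval G S = Set.univ) ∧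
    sInf {n : ℕ | ∃ S : Set V, S.ncard = n ∧ allPathHull G S = Set.univ} =
      sInf {n : ℕ | ∃ S : Set V, S.ncard = n ∧ allPathInterval G S = Set.univ} := by
  simp only [AllPath.hull_eq_interval, implies_true, and_self]
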